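/- arXiv:2605.14732 — 2 statements merged into one kernel-verified Lean document; each statement's English description precedes it below -/
import Mathlib

section
/- Let Ω be a nonempty open subset of ℝ², ρ a C¹ moment weight function on Ω satisfying the Pearson equation div(ρΦ) = ρ(ψ₁,ψ₂) on Ω, and u ∈ L²(Ω, ρ). Then for every pair v = (v₁,v₂) of real polynomials in x₁,x₂, ∫_Ω |u div(ρΦv)| dx₁dx₂ ≤ C ‖u‖_{2,ρ}, where C = (∫_Ω K² ρ dx₁dx₂)^{1/2} < ∞ and K = ψ₁v₁ + ψ₂v₂ + φ_{11}∂_{x₁}v₁ + φ_{21}∂_{x₂}v₁ + φ_{12}∂_{x₁}v₂ + φ_{22}∂_{x₂}v₂. -/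
open MeasureTheory Filter

noncomputable section

abbrev Poly2 := MvPolynomial (Fin 2) ℝ

/-- Evaluation of a two-variable real polynomial at a point of `ℝ × ℝ`. -/
def pev (p : Poly2) (x : ℝ × ℝ) : ℝ := MvPolynomial.eval ![x.1, x.2] p

/-- `uᵗ Φ v` where `Φ` is the matrix with polynomial entries `p11 p12 p21 p22`. -/
def bilPhi (p11 p12 p21 p22 : Poly2) (x u v : ℝ × ℝ) : ℝ :=
  u.1 * (pev p11 x * v.1 + pev p12 x * v.2) + u.2 * (pev p21 x * v.1 + pev p22 x * v.2)

/-- The (classical) gradient of a two-variable polynomial. -/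
def polyGrad (p : Poly2) (x : ℝ × ℝ) : ℝ × ℝ :=
  (pev (MvPolynomial.pderiv (0 : Fin 2) p) x, pev (MvPolynomial.pderiv (1 : Fin 2) p) x)

/-- `ρ` is a weight function on `Ω`. -/
def IsWeight (Ω : Set (ℝ × ℝ)) (ρ : ℝ × ℝ → ℝ) : Prop :=
  Measurable ρ ∧ (∀ᵐ x ∂(volume.restrict Ω), 0 < ρ x) ∧ IntegrableOn ρ Ω

/-- `ρ` is a moment weight function on `Ω`. -/
def IsMomentWeight (Ω : Set (ℝ × ℝ)) (ρ : ℝ × ℝ → ℝ) : Prop :=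
  Measurable ρ ∧ (∀ᵐ x ∂(volume.restrict Ω), 0 < ρ x) ∧
    ∀ m n : ℕ, IntegrableOn (fun x : ℝ × ℝ => |x.1| ^ m * |x.2| ^ n * ρ x) Ω

/-- `Φ` is symmetric and positive definite at every point of `Ω`. -/
def SymPosDef (Ω : Set (ℝ × ℝ)) (p11 p12 p21 p22 : Poly2) : Prop :=
  p12 = p21 ∧ ∀ x ∈ Ω, ∀ ζ : ℝ × ℝ, ζ ≠ 0 → 0 < bilPhi p11 p12 p21 p22 x ζ ζ

/-- `Φ` is symmetric, has entries of degree at most 2, and is positive definite on `Ω`. -/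
def GoodPhi (Ω : Set (ℝ × ℝ)) (p11 p12 p21 p22 : Poly2) : Prop :=
  SymPosDef Ω p11 p12 p21 p22 ∧ p11.totalDegree ≤ 2 ∧ p12.totalDegree ≤ 2 ∧
    p21.totalDegree ≤ 2 ∧ p22.totalDegree ≤ 2

/-- The Pearson equation `div(ρΦ) = ρ(ψ₁,ψ₂)` with explicit degree-one polynomials
`ψⱼ(x) = d_{j1} x₁ + d_{j2} x₂ + e_j` having linearly independent linear parts. -/
def PearsonWith (Ω : Set (ℝ × ℝ)) (ρ : ℝ × ℝ → ℝ) (p11 p12 p21 p22 : Poly2)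
    (d11 d12 d21 d22 e1 e2 : ℝ) : Prop :=
  ContDiffOn ℝ 1 ρ Ω ∧ d11 * d22 - d12 * d21 ≠ 0 ∧
    (∀ x ∈ Ω,
      fderiv ℝ (fun y => ρ y * pev p11 y) x (1, 0) +
        fderiv ℝ (fun y => ρ y * pev p21 y) x (0, 1) = ρ x * (d11 * x.1 + d12 * x.2 + e1)) ∧
    (∀ x ∈ Ω,
      fderiv ℝ (fun y => ρ y * pev p12 y) x (1, 0) +
        fderiv ℝ (fun y => ρ y * pev p22 y) x (0, 1) = ρ x * (d21 * x.1 + d22 * x.2 + e2))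

/-- The Pearson equation `div(ρΦ) = ρ(ψ₁,ψ₂)` for some admissible `ψ₁, ψ₂`. -/
def Pearson (Ω : Set (ℝ × ℝ)) (ρ : ℝ × ℝ → ℝ) (p11 p12 p21 p22 : Poly2) : Prop :=
  ∃ d11 d12 d21 d22 e1 e2 : ℝ, PearsonWith Ω ρ p11 p12 p21 p22 d11 d12 d21 d22 e1 e2

/-- `div(ρΦv)` for a pair of polynomials `v = (v1, v2)`. -/
def divRhoPhi (ρ : ℝ × ℝ → ℝ) (p11 p12 p21 p22 v1 v2 : Poly2) (x : ℝ × ℝ) : ℝ :=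
  fderiv ℝ (fun y => ρ y * (pev p11 y * pev v1 y + pev p12 y * pev v2 y)) x (1, 0) +
    fderiv ℝ (fun y => ρ y * (pev p21 y * pev v1 y + pev p22 y * pev v2 y)) x (0, 1)

/-- Membership in `L²(Ω, ρ)`. -/
def MemL2 (Ω : Set (ℝ × ℝ)) (ρ : ℝ × ℝ → ℝ) (u : ℝ × ℝ → ℝ) : Prop :=
  Measurable u ∧ IntegrableOn (fun x => u x ^ 2 * ρ x) Ω

/-- Membership in the matrix-weighted Lebesgue space `L²(Ω, ρΦ)`. -/
def MemL2M (Ω : Set (ℝ × ℝ)) (ρ : ℝ × ℝ → ℝ) (p11 p12 p21 p22 : Poly2)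
    (w : ℝ × ℝ → ℝ × ℝ) : Prop :=
  Measurable w ∧ IntegrableOn (fun x => ρ x * bilPhi p11 p12 p21 p22 x (w x) (w x)) Ω

/-- `h` is a weak gradient of `u`. -/
def IsWeakGrad (Ω : Set (ℝ × ℝ)) (ρ : ℝ × ℝ → ℝ) (p11 p12 p21 p22 : Poly2)
    (u : ℝ × ℝ → ℝ) (h : ℝ × ℝ → ℝ × ℝ) : Prop :=
  MemL2M Ω ρ p11 p12 p21 p22 h ∧
    ∀ v1 v2 : Poly2,
      ∫ x in Ω, u x * divRhoPhi ρ p11 p12 p21 p22 v1 v2 x =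
        - ∫ x in Ω, ρ x * bilPhi p11 p12 p21 p22 x (h x) (pev v1 x, pev v2 x)

/-- Membership in `W(Ω, ρ, ρΦ)`, the closure of the polynomials in `W^{1,2}(Ω, ρ, ρΦ)`,
for a function `u` with weak gradient `g`. -/
def MemW (Ω : Set (ℝ × ℝ)) (ρ : ℝ × ℝ → ℝ) (p11 p12 p21 p22 : Poly2)
    (u : ℝ × ℝ → ℝ) (g : ℝ × ℝ → ℝ × ℝ) : Prop :=
  MemL2 Ω ρ u ∧ IsWeakGrad Ω ρ p11 p12 p21 p22 u g ∧
    ∀ ε : ℝ, 0 < ε → ∃ q : Poly2,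
      (∫ x in Ω, (u x - pev q x) ^ 2 * ρ x) +
        (∫ x in Ω, ρ x * bilPhi p11 p12 p21 p22 x (g x - polyGrad q x) (g x - polyGrad q x))
          < ε ^ 2

/-- The polynomial function
`K = ψ₁v₁ + ψ₂v₂ + φ₁₁∂₁v₁ + φ₂₁∂₂v₁ + φ₁₂∂₁v₂ + φ₂₂∂₂v₂`. -/
def Kfun (p11 p12 p21 p22 v1 v2 : Poly2) (d11 d12 d21 d22 e1 e2 : ℝ) (x : ℝ × ℝ) : ℝ :=
  (d11 * x.1 + d12 * x.2 + e1) * pev v1 x + (d21 * x.1 + d22 * x.2 + e2) * pev v2 x +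
    pev p11 x * pev (MvPolynomial.pderiv (0 : Fin 2) v1) x +
    pev p21 x * pev (MvPolynomial.pderiv (1 : Fin 2) v1) x +
    pev p12 x * pev (MvPolynomial.pderiv (0 : Fin 2) v2) x +
    pev p22 x * pev (MvPolynomial.pderiv (1 : Fin 2) v2) x

theorem pev_hasFDerivAt (p : Poly2) (x : ℝ × ℝ) :
    HasFDerivAt (pev p)
      (pev (MvPolynomial.pderiv (0 : Fin 2) p) x • ContinuousLinearMap.fst ℝ ℝ ℝ +
        pev (MvPolynomial.pderiv (1 : Fin 2) p) x • ContinuousLinearMap.snd ℝ ℝ ℝ) x := by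
  induction p using MvPolynomial.induction_on with
  | C a =>
    have : pev (MvPolynomial.C a) = fun _ => a := by funext y; simp [pev]
    rw [this]
    simpa [pev] using hasFDerivAt_const a x
  | add p q hp hq =>
    have : pev (p + q) = fun y => pev p y + pev q y := by funext y; simp [pev]
    rw [this]
    refine (hp.add hq).congr_fderiv ?_
    ext <;> simp [pev]
  | mul_X p i hp =>
    fin_cases i
    · have : pev (p * MvPolynomial.X 0) = fun y => pev p y * y.1 := by funext y; simp [pev]
      simp only [Fin.zero_eta, this]
      refine (hp.mul (hasFDerivAt_fst (𝕜 := ℝ) (p := x))).congr_fderiv ?_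
      ext <;> simp [pev, MvPolynomial.pderiv_X, Derivation.leibniz] <;> ring
    · have : pev (p * MvPolynomial.X 1) = fun y => pev p y * y.2 := by funext y; simp [pev]
      simp only [Fin.mk_one, this]
      refine (hp.mul (hasFDerivAt_snd (𝕜 := ℝ) (p := x))).congr_fderiv ?_
      ext <;> simp [pev, MvPolynomial.pderiv_X, Derivation.leibniz] <;> ring

theorem pev_measurable (p : Poly2) : Measurable (pev p) := by
  have : Continuous (pev p) :=
    continuous_iff_continuousAt.2 fun x => (pev_hasFDerivAt p x).continuousAt
  exact this.measurable

theorem pev_integrableOn (Ω : Set (ℝ × ℝ)) (ρ : ℝ × ℝ → ℝ) (hρ : IsMomentWeight Ω ρ)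
    (p : Poly2) : IntegrableOn (fun x => pev p x * ρ x) Ω := by
  obtain ⟨hm, hpos, hint⟩ := hρ
  induction p using MvPolynomial.induction_on' with
  | monomial s a =>
    refine ((hint (s 0) (s 1)).const_mul a).mono ?_ ?_
    · exact ((pev_measurable _).mul hm).aestronglyMeasurable
    · refine Filter.Eventually.of_forall fun x => le_of_eq ?_
      simp [pev, MvPolynomial.eval_monomial, Finsupp.prod_fintype, Fin.prod_univ_two, abs_mul,
        abs_pow]
      ring
  | add p q hp hq =>
    refine (hp.add hq).congr (Filter.Eventually.of_forall fun x => ?_)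
    simp [pev]; ring

theorem divRhoPhi_eq (Ω : Set (ℝ × ℝ)) (hΩopen : IsOpen Ω)
    (ρ : ℝ × ℝ → ℝ) (p11 p12 p21 p22 : Poly2) (d11 d12 d21 d22 e1 e2 : ℝ)
    (hP : PearsonWith Ω ρ p11 p12 p21 p22 d11 d12 d21 d22 e1 e2)
    (v1 v2 : Poly2) (x : ℝ × ℝ) (hx : x ∈ Ω) :
    divRhoPhi ρ p11 p12 p21 p22 v1 v2 x =
      Kfun p11 p12 p21 p22 v1 v2 d11 d12 d21 d22 e1 e2 x * ρ x := by
  obtain ⟨hC, -, h1, h2⟩ := hP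
  have h1 := h1 x hx
  have h2 := h2 x hx
  have hr : HasFDerivAt ρ (fderiv ℝ ρ x) x :=
    ((hC.contDiffAt (hΩopen.mem_nhds hx)).differentiableAt (by simp)).hasFDerivAt
  have key : ∀ p : Poly2, fderiv ℝ (fun y => ρ y * pev p y) x = _ :=
    fun p => (hr.mul (pev_hasFDerivAt p x)).fderiv
  have key2 : ∀ p q : Poly2, fderiv ℝ (fun y => ρ y * (pev p y * pev v1 y + pev q y * pev v2 y)) x = _ :=
    fun p q => (hr.mul (((pev_hasFDerivAt p x).mul (pev_hasFDerivAt v1 x)).add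
      ((pev_hasFDerivAt q x).mul (pev_hasFDerivAt v2 x)))).fderiv
  rw [key, key] at h1 h2
  rw [divRhoPhi, key2, key2, Kfun]
  simp at h1 h2 ⊢
  linear_combination pev v1 x * h1 + pev v2 x * h2

theorem Kfun_pev (p11 p12 p21 p22 v1 v2 : Poly2) (d11 d12 d21 d22 e1 e2 : ℝ) :
    ∃ k : Poly2, Kfun p11 p12 p21 p22 v1 v2 d11 d12 d21 d22 e1 e2 = pev k := by
  refine ⟨(MvPolynomial.C d11 * MvPolynomial.X 0 + MvPolynomial.C d12 * MvPolynomial.X 1 +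
      MvPolynomial.C e1) * v1 + (MvPolynomial.C d21 * MvPolynomial.X 0 +
      MvPolynomial.C d22 * MvPolynomial.X 1 + MvPolynomial.C e2) * v2 +
      p11 * MvPolynomial.pderiv 0 v1 + p21 * MvPolynomial.pderiv 1 v1 +
      p12 * MvPolynomial.pderiv 0 v2 + p22 * MvPolynomial.pderiv 1 v2, ?_⟩
  funext x
  simp [Kfun, pev]

/-- For `u ∈ L²(Ω,ρ)` and a polynomial pair `v`,
`∫_Ω |u div(ρΦv)| ≤ C ‖u‖_{2,ρ}` where `C = (∫_Ω K² ρ)^{1/2} < ∞`. -/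
theorem integral_u_divRhoPhi_bound (Ω : Set (ℝ × ℝ)) (hΩopen : IsOpen Ω) (hΩne : Ω.Nonempty)
    (ρ : ℝ × ℝ → ℝ) (hρ : IsMomentWeight Ω ρ)
    (p11 p12 p21 p22 : Poly2) (hΦ : GoodPhi Ω p11 p12 p21 p22)
    (d11 d12 d21 d22 e1 e2 : ℝ)
    (hP : PearsonWith Ω ρ p11 p12 p21 p22 d11 d12 d21 d22 e1 e2)
    (u : ℝ × ℝ → ℝ) (hu : MemL2 Ω ρ u) (v1 v2 : Poly2) :
    IntegrableOn
      (fun x => Kfun p11 p12 p21 p22 v1 v2 d11 d12 d21 d22 e1 e2 x ^ 2 * ρ x) Ω ∧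
    (∫⁻ x in Ω, ENNReal.ofReal (|u x * divRhoPhi ρ p11 p12 p21 p22 v1 v2 x|)) ≤
      ENNReal.ofReal
        (Real.sqrt (∫ x in Ω, Kfun p11 p12 p21 p22 v1 v2 d11 d12 d21 d22 e1 e2 x ^ 2 * ρ x) *
          Real.sqrt (∫ x in Ω, u x ^ 2 * ρ x)) := by
  obtain ⟨k, hk⟩ := Kfun_pev p11 p12 p21 p22 v1 v2 d11 d12 d21 d22 e1 e2
  have hKint : IntegrableOn
      (fun x => Kfun p11 p12 p21 p22 v1 v2 d11 d12 d21 d22 e1 e2 x ^ 2 * ρ x) Ω := by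
    refine (pev_integrableOn Ω ρ hρ (k ^ 2)).congr (Filter.Eventually.of_forall fun x => ?_)
    simp [hk, pev]
  refine ⟨hKint, ?_⟩
  have hdiv := divRhoPhi_eq Ω hΩopen ρ p11 p12 p21 p22 d11 d12 d21 d22 e1 e2 hP v1 v2
  set K := Kfun p11 p12 p21 p22 v1 v2 d11 d12 d21 d22 e1 e2 with hKdef
  have hKm : Measurable K := by rw [hk]; exact pev_measurable k
  obtain ⟨hm, hpos, -⟩ := hρ
  obtain ⟨hum, huint⟩ := hu
  have hmem : ∀ᵐ x ∂(volume.restrict Ω), x ∈ Ω := ae_restrict_mem hΩopen.measurableSet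
  have hsq : ∀ w : ℝ × ℝ → ℝ, IntegrableOn (fun x => w x ^ 2 * ρ x) Ω →
      (∫⁻ x in Ω, ENNReal.ofReal (|w x| * Real.sqrt (ρ x)) ^ (2 : ℝ)) ^ (1 / (2 : ℝ)) =
        ENNReal.ofReal (Real.sqrt (∫ x in Ω, w x ^ 2 * ρ x)) := by
    intro w hw
    have hnn : 0 ≤ᵐ[volume.restrict Ω] fun x => w x ^ 2 * ρ x := by
      filter_upwards [hpos] with x hx
      exact mul_nonneg (sq_nonneg _) hx.le
    rw [Real.sqrt_eq_rpow, ← ENNReal.ofReal_rpow_of_nonneg (integral_nonneg_of_ae hnn)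
      (by norm_num), ofReal_integral_eq_lintegral_ofReal hw hnn]
    congr 1
    refine lintegral_congr_ae ?_
    filter_upwards [hpos] with x hx
    rw [ENNReal.ofReal_rpow_of_nonneg (by positivity) (by norm_num)]
    congr 1
    rw [Real.rpow_two, mul_pow, sq_abs, Real.sq_sqrt hx.le]
  have hCS := ENNReal.lintegral_mul_le_Lp_mul_Lq (volume.restrict Ω)
    Real.HolderConjugate.two_two
    (f := fun x => ENNReal.ofReal (|K x| * Real.sqrt (ρ x)))
    (g := fun x => ENNReal.ofReal (|u x| * Real.sqrt (ρ x)))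
    (by fun_prop) (by fun_prop)
  rw [hsq K hKint, hsq u huint, ← ENNReal.ofReal_mul (Real.sqrt_nonneg _)] at hCS
  refine le_trans (le_of_eq ?_) hCS
  refine lintegral_congr_ae ?_
  filter_upwards [hpos, hmem] with x hx hxΩ
  simp only [Pi.mul_apply]
  rw [hdiv x hxΩ, ← ENNReal.ofReal_mul (by positivity)]
  congr 1
  rw [abs_mul, abs_mul, abs_of_pos hx]
  nth_rewrite 1 [← Real.mul_self_sqrt hx.le]
  ring
end
end

section
/- Let T = {(x₁,x₂) ∈ ℝ² : x₁ > 0, x₂ > 0, x₁ + x₂ < 1}, let α, β, γ > −1, ρ(x₁,x₂) = x₁^α x₂^β (1−x₁−x₂)^γ, and Φ(x₁,x₂) = [[x₁(1−x₁), −x₁x₂], [−x₁x₂, x₂(1−x₂)]]. If u is a smooth (C¹) function on a neighborhood of the closed triangle T̄ with u ∈ L²(T,ρ) and ∇u ∈ L²(T,ρΦ), then for every pair v = (v₁,v₂) of real polynomials in x₁,x₂ one has ∫_T u div(ρΦv) dx₁dx₂ = −∫_T (∇u)ᵗ ρΦ v dx₁dx₂. -/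
open MeasureTheory Filter

noncomputable section

/-- The open triangle with vertices `(0,0)`, `(1,0)`, `(0,1)`. -/
def Ttri : Set (ℝ × ℝ) := {x : ℝ × ℝ | 0 < x.1 ∧ 0 < x.2 ∧ x.1 + x.2 < 1}

/-- The Jacobi-type weight `ρ(x) = x₁^α x₂^β (1−x₁−x₂)^γ`. -/
def rhoT (α β γ : ℝ) (x : ℝ × ℝ) : ℝ :=
  x.1 ^ α * x.2 ^ β * (1 - x.1 - x.2) ^ γ

/-- The entry `φ₁₁ = x₁(1−x₁)` of the triangle matrix `Φ`. -/
def q11 : Poly2 := MvPolynomial.X 0 * (1 - MvPolynomial.X 0)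

/-- The entry `φ₁₂ = φ₂₁ = −x₁x₂` of the triangle matrix `Φ`. -/
def q12 : Poly2 := -(MvPolynomial.X 0 * MvPolynomial.X 1)

/-- The entry `φ₂₂ = x₂(1−x₂)` of the triangle matrix `Φ`. -/
def q22 : Poly2 := MvPolynomial.X 1 * (1 - MvPolynomial.X 1)

/-- The classical gradient of a function of two variables. -/
def gradF (u : ℝ × ℝ → ℝ) (x : ℝ × ℝ) : ℝ × ℝ :=
  (fderiv ℝ u x (1, 0), fderiv ℝ u x (0, 1))

def Ktri : Set (ℝ × ℝ) := {x : ℝ × ℝ | 0 ≤ x.1 ∧ 0 ≤ x.2 ∧ x.1 + x.2 ≤ 1}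

lemma Ttri_open : IsOpen Ttri := by
  unfold Ttri
  refine (isOpen_lt continuous_const continuous_fst).inter
    ((isOpen_lt continuous_const continuous_snd).inter
      (isOpen_lt (continuous_fst.add continuous_snd) continuous_const))

lemma Ttri_meas : MeasurableSet Ttri := Ttri_open.measurableSet

lemma Ktri_closed : IsClosed Ktri := by
  unfold Ktri
  refine (isClosed_le continuous_const continuous_fst).inter
    ((isClosed_le continuous_const continuous_snd).inter
      (isClosed_le (continuous_fst.add continuous_snd) continuous_const))

lemma Ttri_sub : Ttri ⊆ Ktri := fun _ h => ⟨h.1.le, h.2.1.le, h.2.2.le⟩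

lemma Ktri_compact : IsCompact Ktri := by
  refine IsCompact.of_isClosed_subset
    (isCompact_Icc : IsCompact (Set.Icc ((0:ℝ),(0:ℝ)) (1,1))) Ktri_closed ?_
  rintro ⟨a, b⟩ ⟨h1, h2, h3⟩
  simp only at h1 h2 h3
  exact ⟨⟨h1, h2⟩, ⟨by simp only; linarith, by simp only; linarith⟩⟩

lemma Ktri_sub_closure : Ktri ⊆ closure Ttri := by
  rintro ⟨a, b⟩ ⟨h1, h2, h3⟩
  simp only at h1 h2 h3
  have ht : Tendsto (fun e : ℝ => ((1 - e) * a + e / 3, (1 - e) * b + e / 3)) (nhdsWithin 0 (Set.Ioi 0))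
      (nhds (a, b)) := by
    have : ContinuousAt (fun e : ℝ => ((1 - e) * a + e / 3, (1 - e) * b + e / 3)) 0 := by fun_prop
    have h := this.tendsto
    simp only [sub_zero, one_mul, zero_div, add_zero] at h
    exact h.mono_left nhdsWithin_le_nhds
  refine mem_closure_of_tendsto ht ?_
  filter_upwards [Ioo_mem_nhdsGT (show (0:ℝ) < 1 by norm_num)] with e he
  obtain ⟨he0, he1⟩ := he
  refine ⟨?_, ?_, ?_⟩
  · simp only; nlinarith [mul_nonneg (sub_nonneg.2 he1.le) h1]
  · simp only; nlinarith [mul_nonneg (sub_nonneg.2 he1.le) h2]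
  · simp only; nlinarith [mul_nonneg (sub_nonneg.2 he1.le) (sub_nonneg.2 h3)]

def Smap (x : ℝ × ℝ) : ℝ × ℝ := (x.1, 1 - x.1 - x.2)

lemma Smap_inv : Function.Involutive Smap := by
  rintro ⟨a, b⟩; simp [Smap]

lemma Smap_meas : Measurable Smap := by unfold Smap; fun_prop

lemma Smap_mp : MeasurePreserving Smap volume volume := by
  have := MeasurePreserving.skew_product (μa := (volume : Measure ℝ)) (μb := (volume : Measure ℝ))
    (μc := (volume : Measure ℝ)) (μd := (volume : Measure ℝ)) (f := id)
    (MeasurePreserving.id _) (g := fun a b => 1 - a - b) (by fun_prop)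
    (ae_of_all _ fun a => (Measure.measurePreserving_sub_left volume (1 - a)).map_eq)
  exact this

lemma swap_mp : MeasurePreserving (Prod.swap : ℝ × ℝ → ℝ × ℝ) volume volume :=
  Measure.measurePreserving_swap

lemma Smap_pre : Smap ⁻¹' Ttri = Ttri := by
  ext ⟨a, b⟩
  simp only [Smap, Ttri, Set.mem_preimage, Set.mem_ofPred_eq]
  constructor <;> rintro ⟨h1, h2, h3⟩ <;> refine ⟨?_, ?_, ?_⟩ <;> linarith

lemma swap_pre : Prod.swap ⁻¹' Ttri = Ttri := by
  ext ⟨a, b⟩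
  simp only [Prod.swap, Ttri, Set.mem_preimage, Set.mem_ofPred_eq]
  constructor <;> rintro ⟨h1, h2, h3⟩ <;> refine ⟨?_, ?_, ?_⟩ <;> linarith

lemma Smap_emb : MeasurableEmbedding Smap :=
  (MeasurableEquiv.ofInvolutive Smap Smap_inv Smap_meas).measurableEmbedding

lemma swap_emb : MeasurableEmbedding (Prod.swap : ℝ × ℝ → ℝ × ℝ) :=
  (MeasurableEquiv.prodComm (α := ℝ) (β := ℝ)).measurableEmbedding

lemma int_S (f : ℝ × ℝ → ℝ) : ∫ x in Ttri, f (Smap x) = ∫ x in Ttri, f x := by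
  have := Smap_mp.setIntegral_preimage_emb Smap_emb f Ttri
  rwa [Smap_pre] at this

lemma int_swap (f : ℝ × ℝ → ℝ) : ∫ x in Ttri, f x.swap = ∫ x in Ttri, f x := by
  have := swap_mp.setIntegral_preimage_emb swap_emb f Ttri
  rwa [swap_pre] at this

lemma integ_S (f : ℝ × ℝ → ℝ) (h : IntegrableOn f Ttri) :
    IntegrableOn (fun x => f (Smap x)) Ttri := by
  have := (Smap_mp.integrableOn_comp_preimage Smap_emb (f := f) (s := Ttri)).2 h
  rwa [Smap_pre] at this

lemma integ_swap (f : ℝ × ℝ → ℝ) (h : IntegrableOn f Ttri) :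
    IntegrableOn (fun x => f x.swap) Ttri := by
  have := (swap_mp.integrableOn_comp_preimage swap_emb (f := f) (s := Ttri)).2 h
  rwa [swap_pre] at this

lemma integ_two (a b : ℝ) (ha : -1 < a) (hb : -1 < b) :
    IntegrableOn (fun x : ℝ × ℝ => x.1 ^ a * x.2 ^ b) Ttri := by
  have h1 : ∀ a : ℝ, -1 < a → IntegrableOn (fun x : ℝ => x ^ a) (Set.Ioc 0 1) := by
    intro a ha
    have := intervalIntegral.intervalIntegrable_rpow' (a := 0) (b := 1) ha
    rwa [intervalIntegrable_iff_integrableOn_Ioc_of_le zero_le_one] at this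
  have h2 := Integrable.mul_prod (h1 a ha) (h1 b hb)
  rw [Measure.prod_restrict] at h2
  refine IntegrableOn.mono_set (t := Set.Ioc 0 1 ×ˢ Set.Ioc 0 1) h2 ?_
  rintro ⟨x, y⟩ ⟨h1, h2, h3⟩
  simp only at h1 h2 h3
  exact ⟨⟨h1, by simp only; linarith⟩, ⟨h2, by simp only; linarith⟩⟩

lemma rpow_le3 (t c : ℝ) (ht : 1 / 3 ≤ t) (ht1 : t ≤ 1) (hc : -1 < c) : t ^ c ≤ 3 := by
  have h0 : 0 < t := by linarith
  calc t ^ c ≤ t ^ (-1 : ℝ) := Real.rpow_le_rpow_of_exponent_ge h0 ht1 hc.le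
    _ = t⁻¹ := Real.rpow_neg_one t
    _ ≤ 3 := by
      rw [inv_le_comm₀ h0 (by norm_num)]; linarith

lemma integ_rho (a b c : ℝ) (ha : -1 < a) (hb : -1 < b) (hc : -1 < c) :
    IntegrableOn (rhoT a b c) Ttri := by
  have i1 := integ_two a b ha hb
  have i2 := integ_S _ (integ_two a c ha hc)
  have i3 := integ_swap _ (integ_S _ (integ_two b c hb hc))
  refine Integrable.mono' (((i1.add i2).add i3).const_mul 3) ?_ ?_
  · unfold rhoT
    exact Measurable.aestronglyMeasurable (by fun_prop)
  · refine (ae_restrict_iff' Ttri_meas).2 (ae_of_all _ ?_)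
    rintro ⟨x, y⟩ ⟨h1, h2, h3⟩
    simp only at h1 h2 h3
    have hz : 0 < 1 - x - y := by linarith
    have p1 := Real.rpow_pos_of_pos h1 a
    have p2 := Real.rpow_pos_of_pos h2 b
    have p3 := Real.rpow_pos_of_pos hz c
    have e : 1 - y - x = 1 - x - y := by ring
    simp only [rhoT, Pi.add_apply, Smap, Prod.swap, Real.norm_eq_abs, e]
    rw [abs_of_pos (by positivity)]
    have q1 := mul_pos p1 p2
    have q2 := mul_pos p1 p3
    have q3 := mul_pos p2 p3
    rcases le_or_gt (1/3) x with h | h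
    · have := rpow_le3 x a h (by linarith) ha
      nlinarith [mul_le_mul_of_nonneg_left this q3.le]
    rcases le_or_gt (1/3) y with h' | h'
    · have := rpow_le3 y b h' (by linarith) hb
      nlinarith [mul_le_mul_of_nonneg_left this q2.le]
    · have := rpow_le3 (1 - x - y) c (by linarith) (by linarith) hc
      nlinarith [mul_le_mul_of_nonneg_left this q1.le]

lemma integ_mul (a b c : ℝ) (ha : -1 < a) (hb : -1 < b) (hc : -1 < c) (g : ℝ × ℝ → ℝ)
    (hg : ContinuousOn g Ktri) : IntegrableOn (fun x => rhoT a b c x * g x) Ttri :=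
  (integ_rho a b c ha hb hc).mul_continuousOn_of_subset hg Ttri_meas Ktri_compact Ttri_sub

lemma contOn_fd (w : ℝ × ℝ → ℝ) (U : Set (ℝ × ℝ)) (hU : IsOpen U) (hK : Ktri ⊆ U)
    (hw : ContDiffOn ℝ 1 w U) (e : ℝ × ℝ) : ContinuousOn (fun x => fderiv ℝ w x e) Ktri :=
  ((hw.continuousOn_fderiv_of_isOpen hU le_rfl).mono hK).clm_apply continuousOn_const

lemma diffAt (w : ℝ × ℝ → ℝ) (U : Set (ℝ × ℝ)) (hU : IsOpen U) (hK : Ktri ⊆ U)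
    (hw : ContDiffOn ℝ 1 w U) (x : ℝ × ℝ) (hx : x ∈ Ktri) : DifferentiableAt ℝ w x :=
  (hw.differentiableOn one_ne_zero).differentiableAt (hU.mem_nhds (hK hx))

def E1 (a b c : ℝ) (w : ℝ × ℝ → ℝ) (x : ℝ × ℝ) : ℝ :=
  rhoT a b c x * (fderiv ℝ w x (1, 0) * (x.1 * (1 - x.1 - x.2)) +
    w x * ((a + 1) * (1 - x.1 - x.2) - (c + 1) * x.1))

def E2 (a b c : ℝ) (w : ℝ × ℝ → ℝ) (x : ℝ × ℝ) : ℝ :=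
  rhoT a b c x * (fderiv ℝ w x (0, 1) * (x.2 * (1 - x.1 - x.2)) +
    w x * ((b + 1) * (1 - x.1 - x.2) - (c + 1) * x.2))

def E3 (a b c : ℝ) (w : ℝ × ℝ → ℝ) (x : ℝ × ℝ) : ℝ :=
  rhoT a b c x * ((fderiv ℝ w x (1, 0) - fderiv ℝ w x (0, 1)) * (x.1 * x.2) +
    w x * ((a + 1) * x.2 - (b + 1) * x.1))

section
variable (a b c : ℝ) (ha : -1 < a) (hb : -1 < b) (hc : -1 < c)
  (w : ℝ × ℝ → ℝ) (U : Set (ℝ × ℝ)) (hU : IsOpen U) (hK : Ktri ⊆ U) (hw : ContDiffOn ℝ 1 w U)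

lemma integ_E1 (ha : -1 < a) (hb : -1 < b) (hc : -1 < c) (hU : IsOpen U) (hK : Ktri ⊆ U)
    (hw : ContDiffOn ℝ 1 w U) : IntegrableOn (E1 a b c w) Ttri := by
  refine integ_mul a b c ha hb hc _ ?_
  have h1 := contOn_fd w U hU hK hw (1, 0)
  have h2 := hw.continuousOn.mono hK
  fun_prop

lemma integ_E2 (ha : -1 < a) (hb : -1 < b) (hc : -1 < c) (hU : IsOpen U) (hK : Ktri ⊆ U)
    (hw : ContDiffOn ℝ 1 w U) : IntegrableOn (E2 a b c w) Ttri := by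
  refine integ_mul a b c ha hb hc _ ?_
  have h1 := contOn_fd w U hU hK hw (0, 1)
  have h2 := hw.continuousOn.mono hK
  fun_prop

lemma integ_E3 (ha : -1 < a) (hb : -1 < b) (hc : -1 < c) (hU : IsOpen U) (hK : Ktri ⊆ U)
    (hw : ContDiffOn ℝ 1 w U) : IntegrableOn (E3 a b c w) Ttri := by
  refine integ_mul a b c ha hb hc _ ?_
  have h1 := contOn_fd w U hU hK hw (1, 0)
  have h1 := contOn_fd w U hU hK hw (0, 1)
  have h2 := hw.continuousOn.mono hK
  fun_prop

lemma inner_zero (ha : -1 < a) (hc : -1 < c) (hU : IsOpen U) (hK : Ktri ⊆ U)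
    (hw : ContDiffOn ℝ 1 w U) (y : ℝ) (hy : 0 < y) (hy1 : y < 1) :
    ∫ t in Set.Ioc 0 (1 - y), E1 a b c w (t, y) = 0 := by
  by_cases hi : IntegrableOn (fun t => E1 a b c w (t, y)) (Set.Ioc 0 (1 - y))
  swap
  · exact integral_undef hi
  have hle : (0:ℝ) ≤ 1 - y := by linarith
  rw [← intervalIntegral.integral_of_le hle]
  rw [← intervalIntegrable_iff_integrableOn_Ioc_of_le hle] at hi
  have := intervalIntegral.integral_eq_sub_of_hasDerivAt_of_le hle
    (f := fun t => w (t, y) * (t ^ (a + 1) * y ^ b * (1 - t - y) ^ (c + 1)))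
    (f' := fun t => E1 a b c w (t, y)) ?_ ?_ hi
  · rw [this]
    have e : (1 : ℝ) - (1 - y) - y = 0 := by ring
    simp only [e]
    rw [Real.zero_rpow (by linarith), Real.zero_rpow (by linarith)]
    ring
  · have h1 : ContinuousOn (fun t : ℝ => w (t, y)) (Set.Icc 0 (1 - y)) := by
      refine ContinuousOn.comp (hw.continuousOn.mono hK) (by fun_prop) ?_
      rintro t ⟨ht, ht'⟩
      exact ⟨ht, hy.le, by simp only; linarith⟩
    have h2 : Continuous (fun t : ℝ => t ^ (a + 1)) :=
      Real.continuous_rpow_const (by linarith)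
    have h3 : Continuous (fun t : ℝ => (1 - t - y) ^ (c + 1)) :=
      (Real.continuous_rpow_const (by linarith : 0 ≤ c + 1)).comp (by fun_prop : Continuous fun t : ℝ => 1 - t - y)
    exact h1.mul ((h2.mul continuous_const).mul h3).continuousOn
  · rintro t ⟨ht, ht'⟩
    have hz : 0 < 1 - t - y := by linarith
    have hd := diffAt w U hU hK hw (t, y) ⟨ht.le, hy.le, by simp only; linarith⟩
    have k1 : HasDerivAt (fun t : ℝ => w (t, y)) (fderiv ℝ w (t, y) (1, 0)) t :=
      hd.hasFDerivAt.comp_hasDerivAt t ((hasDerivAt_id t).prodMk (hasDerivAt_const t y))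
    have k2 : HasDerivAt (fun t : ℝ => t ^ (a + 1)) _ t :=
      Real.hasDerivAt_rpow_const (p := a + 1) (Or.inl ht.ne')
    have k3 : HasDerivAt (fun t : ℝ => (1 - t - y) ^ (c + 1)) _ t :=
      (((hasDerivAt_id t).const_sub 1).sub_const y).rpow_const (p := c + 1) (Or.inl hz.ne')
    have k := k1.mul ((k2.mul_const (y ^ b)).mul k3)
    refine k.congr_deriv ?_
    simp only [E1, rhoT, id, Pi.mul_apply, add_sub_cancel_right, Real.rpow_add_one ht.ne', Real.rpow_add_one hz.ne']
    ring

lemma key1 (ha : -1 < a) (hb : -1 < b) (hc : -1 < c) (hU : IsOpen U) (hK : Ktri ⊆ U)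
    (hw : ContDiffOn ℝ 1 w U) : ∫ x in Ttri, E1 a b c w x = 0 := by
  have hi := integ_E1 a b c w U ha hb hc hU hK hw
  rw [← integral_indicator Ttri_meas]
  have hi' := hi.integrable_indicator Ttri_meas
  rw [Measure.volume_eq_prod] at hi' ⊢
  rw [integral_prod_symm _ hi']
  refine integral_eq_zero_of_ae (ae_of_all _ fun y => ?_)
  simp only [Pi.zero_apply]
  by_cases hy : 0 < y ∧ y < 1
  · rw [← inner_zero a b c w U ha hc hU hK hw y hy.1 hy.2, integral_Ioc_eq_integral_Ioo,
      ← integral_indicator measurableSet_Ioo]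
    congr 1
    ext t
    simp only [Set.indicator]
    congr 1
    simp only [Ttri, Set.mem_ofPred_eq, Set.mem_Ioo, eq_iff_iff]
    constructor
    · rintro ⟨h1, h2, h3⟩; exact ⟨h1, by linarith⟩
    · rintro ⟨h1, h2⟩; exact ⟨h1, hy.1, by linarith⟩
  · refine integral_eq_zero_of_ae (ae_of_all _ fun t => ?_)
    refine Set.indicator_of_notMem ?_ _
    rintro ⟨h1, h2, h3⟩
    simp only at h1 h2 h3
    exact hy ⟨h2, by linarith⟩

lemma key2 (ha : -1 < a) (hb : -1 < b) (hc : -1 < c) (hU : IsOpen U) (hK : Ktri ⊆ U)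
    (hw : ContDiffOn ℝ 1 w U) : ∫ x in Ttri, E2 a b c w x = 0 := by
  have hs : ContDiff ℝ 1 (Prod.swap : ℝ × ℝ → ℝ × ℝ) := contDiff_snd.prodMk contDiff_fst
  rw [← int_swap, ← key1 b a c (fun x => w x.swap) (Prod.swap ⁻¹' U) hb ha hc
    (hU.preimage continuous_swap) ?_ (hw.comp hs.contDiffOn (fun x hx => hx))]
  · refine setIntegral_congr_fun Ttri_meas ?_
    rintro ⟨x, y⟩ ⟨h1, h2, h3⟩
    simp only at h1 h2 h3
    have hd := diffAt w U hU hK hw (y, x) ⟨h2.le, h1.le, by simp only; linarith⟩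
    have hf : HasFDerivAt (fun p : ℝ × ℝ => w p.swap) _ (x, y) :=
      HasFDerivAt.comp (x, y) (g := w) (f := Prod.swap) hd.hasFDerivAt
        (hasFDerivAt_snd.prodMk hasFDerivAt_fst)
    simp only [E1, E2, rhoT, Prod.swap] at *
    rw [hf.fderiv]
    have e : 1 - y - x = 1 - x - y := by ring
    simp only [e, ContinuousLinearMap.comp_apply, ContinuousLinearMap.prod_apply,
      ContinuousLinearMap.coe_fst', ContinuousLinearMap.coe_snd']
    ring
  · rintro ⟨x, y⟩ ⟨h1, h2, h3⟩
    simp only at h1 h2 h3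
    exact hK ⟨h2, h1, by simp only [Prod.swap]; linarith⟩

lemma key3 (ha : -1 < a) (hb : -1 < b) (hc : -1 < c) (hU : IsOpen U) (hK : Ktri ⊆ U)
    (hw : ContDiffOn ℝ 1 w U) : ∫ x in Ttri, E3 a b c w x = 0 := by
  have hs : ContDiff ℝ 1 Smap := by unfold Smap; fun_prop
  rw [← int_S, ← key1 a c b (fun x => w (Smap x)) (Smap ⁻¹' U) ha hc hb
    (hU.preimage hs.continuous) ?_ (hw.comp hs.contDiffOn (fun x hx => hx))]
  · refine setIntegral_congr_fun Ttri_meas ?_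
    rintro ⟨x, y⟩ ⟨h1, h2, h3⟩
    simp only at h1 h2 h3
    have hd := diffAt w U hU hK hw (Smap (x, y))
      ⟨h1.le, by simp only [Smap]; linarith, by simp only [Smap]; linarith⟩
    have hS : HasFDerivAt Smap _ (x, y) :=
      (hasFDerivAt_fst (𝕜 := ℝ)).prodMk (((hasFDerivAt_fst (𝕜 := ℝ)).const_sub 1).sub
        (hasFDerivAt_snd (𝕜 := ℝ)))
    have hf : HasFDerivAt (fun p : ℝ × ℝ => w (Smap p)) _ (x, y) :=
      HasFDerivAt.comp (x, y) (g := w) (f := Smap) hd.hasFDerivAt hS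
    have hl : fderiv ℝ w (Smap (x, y)) (1, -1) = fderiv ℝ w (Smap (x, y)) (1, 0)
        - fderiv ℝ w (Smap (x, y)) (0, 1) := by
      rw [← map_sub]; simp
    simp only [E1, E3]
    rw [hf.fderiv]
    simp only [ContinuousLinearMap.comp_apply, ContinuousLinearMap.prod_apply,
      ContinuousLinearMap.sub_apply, ContinuousLinearMap.neg_apply,
      ContinuousLinearMap.coe_fst', ContinuousLinearMap.coe_snd', sub_zero]
    rw [hl]
    simp only [Smap, rhoT]
    have e : 1 - x - (1 - x - y) = y := by ring
    rw [e]
    ring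
  · rintro ⟨x, y⟩ ⟨h1, h2, h3⟩
    simp only at h1 h2 h3
    exact hK ⟨h1, by simp only [Smap]; linarith, by simp only [Smap]; linarith⟩

end

lemma pev_contDiff (p : Poly2) : ContDiff ℝ 1 (pev p) := by
  induction p using MvPolynomial.induction_on with
  | C r => 
    have : pev (MvPolynomial.C r) = fun _ => r := by ext x; simp [pev]
    rw [this]; exact contDiff_const
  | add p q hp hq =>
    have : pev (p + q) = fun x => pev p x + pev q x := by ext x; simp [pev]
    rw [this]; exact hp.add hq
  | mul_X p i hp =>
    have : pev (p * MvPolynomial.X i) = fun x => pev p x * (![x.1, x.2] i) := by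
      ext x; simp [pev]
    rw [this]
    refine hp.mul ?_
    fin_cases i
    · simpa using contDiff_fst
    · simpa using contDiff_snd

lemma pev11 : pev q11 = fun x => x.1 * (1 - x.1) := by ext x; simp [pev, q11]
lemma pev12 : pev q12 = fun x => -(x.1 * x.2) := by ext x; simp [pev, q12]
lemma pev22 : pev q22 = fun x => x.2 * (1 - x.2) := by ext x; simp [pev, q22]

lemma rho_fd (a b c : ℝ) (x : ℝ × ℝ) (hx : x ∈ Ttri) :
    ∃ L : ℝ × ℝ →L[ℝ] ℝ, HasFDerivAt (rhoT a b c) L x ∧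
      L (1, 0) = rhoT a b c x * (a / x.1 - c / (1 - x.1 - x.2)) ∧
      L (0, 1) = rhoT a b c x * (b / x.2 - c / (1 - x.1 - x.2)) := by
  obtain ⟨h1, h2, h3⟩ := hx
  have hz : 0 < 1 - x.1 - x.2 := by linarith
  have k1 : HasFDerivAt (fun x : ℝ × ℝ => x.1 ^ a) _ x :=
    (hasFDerivAt_fst (𝕜 := ℝ)).rpow_const (p := a) (Or.inl h1.ne')
  have k2 : HasFDerivAt (fun x : ℝ × ℝ => x.2 ^ b) _ x :=
    (hasFDerivAt_snd (𝕜 := ℝ)).rpow_const (p := b) (Or.inl h2.ne')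
  have k3 : HasFDerivAt (fun x : ℝ × ℝ => (1 - x.1 - x.2) ^ c) _ x :=
    (((hasFDerivAt_fst (𝕜 := ℝ)).const_sub 1).sub
      (hasFDerivAt_snd (𝕜 := ℝ))).rpow_const (p := c) (Or.inl hz.ne')
  refine ⟨_, (k1.mul k2).mul k3, ?_, ?_⟩
  · simp [rhoT, Real.rpow_sub_one h1.ne', Real.rpow_sub_one h2.ne', Real.rpow_sub_one hz.ne']
    field_simp
    ring
  · simp [rhoT, Real.rpow_sub_one h1.ne', Real.rpow_sub_one h2.ne', Real.rpow_sub_one hz.ne']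
    field_simp
    ring

lemma pointwise (a b c : ℝ) (u f g : ℝ × ℝ → ℝ) (x : ℝ × ℝ) (hx : x ∈ Ttri)
    (hu : DifferentiableAt ℝ u x) (hf : DifferentiableAt ℝ f x) (hg : DifferentiableAt ℝ g x) :
    u x * (fderiv ℝ (fun y => rhoT a b c y * (y.1 * (1 - y.1) * f y + -(y.1 * y.2) * g y)) x (1, 0)
      + fderiv ℝ (fun y => rhoT a b c y * (-(y.1 * y.2) * f y + y.2 * (1 - y.2) * g y)) x (0, 1)) =
    (E1 a b c (fun y => u y * f y) x + E2 a b c (fun y => u y * g y) x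
      + E3 a b c (fun y => u y * (f y - g y)) x) -
    rhoT a b c x * (fderiv ℝ u x (1, 0) * (x.1 * (1 - x.1) * f x + -(x.1 * x.2) * g x)
      + fderiv ℝ u x (0, 1) * (-(x.1 * x.2) * f x + x.2 * (1 - x.2) * g x)) := by
  obtain ⟨L, hL, hL1, hL2⟩ := rho_fd a b c x hx
  obtain ⟨h1, h2, h3⟩ := hx
  have hz : 0 < 1 - x.1 - x.2 := by linarith
  have k1 : HasFDerivAt (fun y : ℝ × ℝ => y.1) _ x := hasFDerivAt_fst (𝕜 := ℝ)
  have k2 : HasFDerivAt (fun y : ℝ × ℝ => y.2) _ x := hasFDerivAt_snd (𝕜 := ℝ)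
  have m1 := hL.mul (((k1.mul (k1.const_sub 1)).mul hf.hasFDerivAt).add
    ((k1.mul k2).neg.mul hg.hasFDerivAt))
  have m2 := hL.mul (((k1.mul k2).neg.mul hf.hasFDerivAt).add
    ((k2.mul (k2.const_sub 1)).mul hg.hasFDerivAt))
  have n1 := hu.hasFDerivAt.mul hf.hasFDerivAt
  have n2 := hu.hasFDerivAt.mul hg.hasFDerivAt
  have n3 := hu.hasFDerivAt.mul (hf.hasFDerivAt.sub hg.hasFDerivAt)
  have e1 := congrArg (fun M => M (1, 0)) m1.fderiv
  have e2 := congrArg (fun M => M (0, 1)) m2.fderiv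
  have f1 := congrArg (fun M => M (1, 0)) n1.fderiv
  have f2 := congrArg (fun M => M (0, 1)) n2.fderiv
  have f3 := congrArg (fun M => M (1, 0)) n3.fderiv
  have f4 := congrArg (fun M => M (0, 1)) n3.fderiv
  simp only [E1, E2, E3]
  erw [e1, e2, f1, f2, f3, f4]
  simp [hL1, hL2]
  generalize rhoT a b c x = r
  field_simp
  ring

/-- Integration by parts on the triangle: if `u` is `C¹` on a neighborhood
of the closed triangle, `u ∈ L²(T,ρ)` and `∇u ∈ L²(T,ρΦ)`, then
`∫_T u div(ρΦv) = −∫_T (∇u)ᵗ ρΦ v` for every polynomial pair `v`. -/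
theorem integration_by_parts_triangle (α β γ : ℝ) (hα : -1 < α) (hβ : -1 < β) (hγ : -1 < γ)
    (u : ℝ × ℝ → ℝ)
    (hu : ∃ U : Set (ℝ × ℝ), IsOpen U ∧ closure Ttri ⊆ U ∧ ContDiffOn ℝ 1 u U)
    (huL2 : IntegrableOn (fun x => u x ^ 2 * rhoT α β γ x) Ttri)
    (hgrad : IntegrableOn
      (fun x => rhoT α β γ x * bilPhi q11 q12 q12 q22 x (gradF u x) (gradF u x)) Ttri)
    (v1 v2 : Poly2) :
    ∫ x in Ttri, u x * divRhoPhi (rhoT α β γ) q11 q12 q12 q22 v1 v2 x =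
      - ∫ x in Ttri,
          rhoT α β γ x * bilPhi q11 q12 q12 q22 x (gradF u x) (pev v1 x, pev v2 x) := by
  obtain ⟨U, hU, hcl, hw⟩ := hu
  have hK : Ktri ⊆ U := Ktri_sub_closure.trans hcl
  have c1 := pev_contDiff v1
  have c2 := pev_contDiff v2
  have w1 := hw.mul c1.contDiffOn
  have w2 := hw.mul c2.contDiffOn
  have w3 := hw.mul (c1.sub c2).contDiffOn
  have i1 := integ_E1 α β γ _ U hα hβ hγ hU hK w1
  have i2 := integ_E2 α β γ _ U hα hβ hγ hU hK w2
  have i3 := integ_E3 α β γ _ U hα hβ hγ hU hK w3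
  have j1 := key1 α β γ _ U hα hβ hγ hU hK w1
  have j2 := key2 α β γ _ U hα hβ hγ hU hK w2
  have j3 := key3 α β γ _ U hα hβ hγ hU hK w3
  have ib : IntegrableOn (fun x => rhoT α β γ x *
      bilPhi q11 q12 q12 q22 x (gradF u x) (pev v1 x, pev v2 x)) Ttri := by
    refine integ_mul α β γ hα hβ hγ _ ?_
    have d1 := contOn_fd u U hU hK hw (1, 0)
    have d2 := contOn_fd u U hU hK hw (0, 1)
    have d3 := c1.continuous
    have d4 := c2.continuous
    simp only [bilPhi, gradF, pev11, pev12, pev22]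
    fun_prop
  rw [setIntegral_congr_fun Ttri_meas (g := fun x =>
    ((E1 α β γ (fun y => u y * pev v1 y) + E2 α β γ (fun y => u y * pev v2 y)) +
      E3 α β γ (fun y => u y * (pev v1 y - pev v2 y))) x - rhoT α β γ x *
      bilPhi q11 q12 q12 q22 x (gradF u x) (pev v1 x, pev v2 x)) ?_]
  · rw [integral_sub ((i1.add i2).add i3) ib]
    erw [integral_add (i1.add i2) i3, integral_add i1 i2]
    rw [j1, j2, j3]
    simp
  · intro x hx
    have := pointwise α β γ u (pev v1) (pev v2) x hx (diffAt u U hU hK hw x (Ttri_sub hx))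
      (c1.differentiable one_ne_zero x) (c2.differentiable one_ne_zero x)
    simp only [divRhoPhi, bilPhi, gradF, pev11, pev12, pev22]
    exact this
end
end
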